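/- arXiv:2009.10512 — 3 statements merged into one kernel-verified Lean document; each statement's English description precedes it below -/
import Mathlib

section
/- Lemma. Let R be a commutative ring and a ∈ R. Assume R is a-torsion free (for all x ∈ R, a·x = 0 implies x = 0) and R is a-adically complete (complete and separated for the topology defined by the ideals a^k R). Let n ∈ ℕ and let φ : R^n → R^n be an R-linear endomorphism of the free module R^n. Then φ is bijective if and only if the induced (R/aR)-linear endomorphism of (R/aR)^n obtained by reducing φ modulo a is bijective. -/
/-!
A square matrix over a commutative ring is invertible exactly when its determinant is a unit, and
taking determinants commutes with ring homomorphisms; so a homomorphism that reflects units of the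
ring reflects invertibility of matrices. Reduction modulo `a` reflects units because adic
completeness puts `a` in the Jacobson radical.
-/

section

variable {n R S : Type*} [Fintype n] [DecidableEq n]

theorem bijective_toLin'_iff_isUnit [CommSemiring R] (M : Matrix n n R) :
    Function.Bijective M.toLin' ↔ IsUnit M :=
  (Module.End.isUnit_iff _).symm.trans Matrix.isUnit_toLin'_iff

theorem bijective_iff_isUnit_toMatrix' [CommSemiring R] (φ : (n → R) →ₗ[R] (n → R)) :
    Function.Bijective φ ↔ IsUnit φ.toMatrix' :=
  (Module.End.isUnit_iff φ).symm.trans LinearMap.isUnit_toMatrix'_iff.symm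

variable [CommRing R] [CommRing S] (f : R →+* S) [IsLocalHom f]

theorem isLocalHom_mapMatrix : IsLocalHom (f.mapMatrix : Matrix n n R →+* Matrix n n S) where
  map_nonunit M hM := by
    rw [Matrix.isUnit_iff_isUnit_det, ← RingHom.map_det] at hM
    exact M.isUnit_iff_isUnit_det.mpr (hM.of_map f)

theorem bijective_iff_bijective_mod_of_adic_complete_general (φ : (n → R) →ₗ[R] (n → R)) :
    Function.Bijective φ ↔ Function.Bijective (Matrix.toLin' (φ.toMatrix'.map f)) := by
  have := isLocalHom_mapMatrix (n := n) f
  calc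
    Function.Bijective φ ↔ IsUnit φ.toMatrix' := bijective_iff_isUnit_toMatrix' φ
    _ ↔ IsUnit (φ.toMatrix'.map f) := (isUnit_map_iff f.mapMatrix φ.toMatrix').symm
    _ ↔ Function.Bijective (Matrix.toLin' (φ.toMatrix'.map f)) :=
      (bijective_toLin'_iff_isUnit _).symm

end

/-- **Lemma (invertibility lifts along `a`-adic completion).**
Let `R` be `a`-torsion free and `a`-adically complete. An `R`-linear endomorphism
`φ` of `R^n` is bijective if and only if its reduction modulo `a`, i.e. the
`(R/aR)`-linear endomorphism of `(R/aR)^n` given by the matrix of `φ` with entries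
reduced mod `a`, is bijective. -/
theorem bijective_iff_bijective_mod_of_adic_complete
    (R : Type) [CommRing R] (a : R)
    -- `R` is `a`-torsion free
    (htf : ∀ x : R, a * x = 0 → x = 0)
    -- `R` is `a`-adically complete (complete and separated for the `a`-adic topology)
    (hcomplete : IsAdicComplete (Ideal.span {a}) R)
    (n : ℕ) (φ : (Fin n → R) →ₗ[R] (Fin n → R)) :
    Function.Bijective φ ↔
      Function.Bijective
        (Matrix.toLin'
          ((LinearMap.toMatrix' φ).map (Ideal.Quotient.mk (Ideal.span {a})))) := by
  have := isLocalHom_of_le_jacobson_bot _ (IsAdicComplete.le_jacobson_bot (Ideal.span {a}))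
  exact bijective_iff_bijective_mod_of_adic_complete_general _ φ
end

section
/- Matrix congruence computation from the proof of the limit formula. Let R be a commutative ring, p a prime, σ : R → R a ring endomorphism, and n a finite (index) type; for an n × n matrix M over R write M^σ for the matrix obtained by applying σ to each entry. Let b_1 be an invertible n × n matrix over R and define b_s for s ≥ 1 recursively by b_{s+1} = b_1 · (b_s)^σ (so b_s = b_1 · b_1^σ ⋯ b_1^{σ^{s−1}}). Suppose (α_s)_{s≥1} is a sequence of invertible n × n matrices over R such that α_s ≡ b_s (mod p^s R) entrywise for every s ≥ 1. Then for every s ≥ 1, α_{s+1} · (α_s^σ)^{−1} ≡ b_1 (mod p^s R) entrywise. -/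
/-!
Multiplying on the right by the invertible matrix `α_s^σ` turns the claim into
`α_{s+1} ≡ b_1 ⬝ α_s^σ (mod p^s)`. Since the ideals `(p^s)` decrease with `s`, the congruence for
`α_{s+1}` gives `α_{s+1} ≡ b_{s+1} = b_1 ⬝ b_s^σ (mod p^s)`; since `σ` maps `(p^s)` into itself,
the congruence for `α_s` gives `α_s^σ ≡ b_s^σ (mod p^s)`.
-/

section MatrixIdeal

variable {R S n : Type*} [Fintype n] [DecidableEq n]

instance isTwoSided_ideal_matrix [Semiring R] (I : Ideal R) [I.IsTwoSided] :
    (I.matrix n).IsTwoSided where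
  mul_mem_of_left N hM i j := by
    rw [Matrix.mul_apply]
    exact sum_mem fun k _ => I.mul_mem_right (N k j) (hM i k)

theorem ideal_matrix_le_comap_mapMatrix [Semiring R] [Semiring S] {f : R →+* S} {I : Ideal R}
    {J : Ideal S} (h : I ≤ J.comap f) : I.matrix n ≤ (J.matrix n).comap f.mapMatrix :=
  fun _ hM i j => h (hM i j)

theorem mul_inv_sub_mem_of_sub_mul_mem [CommRing R] {I : Ideal (Matrix n n R)} [I.IsTwoSided]
    {A C U : Matrix n n R} (hU : IsUnit U) (h : A - C * U ∈ I) : A * U⁻¹ - C ∈ I := by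
  have hdet : IsUnit U.det := U.isUnit_iff_isUnit_det.mp hU
  have factor : A * U⁻¹ - C = (A - C * U) * U⁻¹ := by
    rw [sub_mul, U.mul_nonsing_inv_cancel_right C hdet]
  exact factor ▸ I.mul_mem_right U⁻¹ h

theorem mul_inv_map_sub_mem_ideal_matrix [CommRing R] [CommRing S] {f : R →+* S} {I : Ideal R}
    {J : Ideal S} (hIJ : I ≤ J.comap f) {A B : Matrix n n R} {A' C : Matrix n n S}
    (hA : IsUnit A) (hAB : A - B ∈ I.matrix n) (hA' : A' - C * B.map f ∈ J.matrix n) :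
    A' * (A.map f)⁻¹ - C ∈ J.matrix n := by
  have hmap : A.map f - B.map f ∈ J.matrix n := by
    simpa only [Ideal.mem_comap, map_sub, RingHom.mapMatrix_apply]
      using ideal_matrix_le_comap_mapMatrix hIJ hAB
  refine mul_inv_sub_mem_of_sub_mul_mem (hA.map f.mapMatrix) ?_
  have split : A' - C * A.map f = (A' - C * B.map f) - C * (A.map f - B.map f) := by
    rw [mul_sub, sub_sub_sub_cancel_right]
  exact split ▸ sub_mem hA' (Ideal.mul_mem_left _ C hmap)

end MatrixIdeal

theorem span_natCast_pow_le_comap {R S : Type*} [Semiring R] [Semiring S] (f : R →+* S)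
    (p s : ℕ) : Ideal.span {(p : R) ^ s} ≤ (Ideal.span {(p : S) ^ s}).comap f := by
  rw [Ideal.span_singleton_le_iff_mem, Ideal.mem_comap, map_pow, map_natCast]
  exact Ideal.mem_span_singleton_self _

theorem antitone_span_singleton_pow {R : Type*} [CommSemiring R] (r : R) :
    Antitone fun s : ℕ => Ideal.span {r ^ s} :=
  fun _ _ hst => Ideal.span_singleton_le_span_singleton.mpr (pow_dvd_pow r hst)

theorem matrix_quotient_congruence_general {R n : Type*} [CommRing R] [Fintype n] [DecidableEq n]
    {σ : R →+* R} {I : ℕ → Ideal R} (hI : Antitone I) (hσ : ∀ s, 1 ≤ s → I s ≤ (I s).comap σ)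
    {c : Matrix n n R} {b α : ℕ → Matrix n n R}
    (hb : ∀ s, 1 ≤ s → b (s + 1) = c * (b s).map σ) (hα : ∀ s, 1 ≤ s → IsUnit (α s))
    (hαb : ∀ s, 1 ≤ s → α s - b s ∈ (I s).matrix n) (s : ℕ) (hs : 1 ≤ s) :
    α (s + 1) * ((α s).map σ)⁻¹ - c ∈ (I s).matrix n := by
  have hnext : α (s + 1) - b (s + 1) ∈ (I s).matrix n :=
    Ideal.matrix_monotone n (hI s.le_succ) (hαb (s + 1) (Nat.le_add_left 1 s))
  rw [hb s hs] at hnext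
  exact mul_inv_map_sub_mem_ideal_matrix (hσ s hs) (hα s hs) (hαb s hs) hnext

/-- **Matrix congruence computation from the proof of the limit formula.**
If `b_{s+1} = b_1 ⬝ (b_s)^σ` with `b_1` invertible, and `(α_s)` are invertible matrices
with `α_s ≡ b_s (mod p^s)` entrywise, then `α_{s+1} ⬝ (α_s^σ)⁻¹ ≡ b_1 (mod p^s)` entrywise. -/
theorem matrix_quotient_congruence
    (R : Type) [CommRing R]
    (p : ℕ) (hp : p.Prime)
    (σ : R →+* R)
    (n : Type) [Fintype n] [DecidableEq n]
    (b : ℕ → Matrix n n R)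
    (hb1 : IsUnit (b 1))
    (hbrec : ∀ s : ℕ, 1 ≤ s → b (s + 1) = b 1 * (b s).map σ)
    (α : ℕ → Matrix n n R)
    (hαunit : ∀ s : ℕ, 1 ≤ s → IsUnit (α s))
    (hcong : ∀ s : ℕ, 1 ≤ s → ∀ u v : n, (α s - b s) u v ∈ Ideal.span {(p : R) ^ s}) :
    ∀ s : ℕ, 1 ≤ s → ∀ u v : n,
      (α (s + 1) * ((α s).map σ)⁻¹ - b 1) u v ∈ Ideal.span {(p : R) ^ s} :=
  matrix_quotient_congruence_general (antitone_span_singleton_pow (p : R))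
    (fun s _ => span_natCast_pow_le_comap σ p s) hbrec hαunit hcong
end

section
/- Core congruence of the two-basic-sets-of-curves lemma. Let p be a prime, R a commutative ring, M an R-module, and I a finite index type. Suppose given elements x(j,n,i) ∈ R for j, i ∈ I and n ∈ ℕ such that x(i,0,i) = 1 for all i ∈ I and x(j,n,i) ∈ pR whenever it is not the case that (n = 0 and i = j). Suppose given families a, a* : I → ℕ → M satisfying, for all j ∈ I and all s ∈ ℕ, a(j,s) = Σ_{n=0}^{s} Σ_{i∈I} p^n · x(j,n,i)^{p^{s−n}} · a*(i, s−n). Then for all j ∈ I and all s ∈ ℕ, a(j,s) − a*(j,s) ∈ p^s M. -/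
/-!
Modulo `p ^ s`, only the term `n = 0`, `i = j` of the sum survives, and it equals `astar j s`: in
every other term `p` divides `x j n i`, so the coefficient is divisible by `p ^ (n + p ^ (s - n))`,
and `n + p ^ (s - n) ≥ s` because `k < p ^ k`.
-/

open Pointwise in
theorem smul_mem_smul_top_of_dvd {R M : Type*} [CommSemiring R] [AddCommMonoid M] [Module R M]
    {r c : R} (h : r ∣ c) (m : M) : c • m ∈ r • (⊤ : Submodule R M) := by
  obtain ⟨d, rfl⟩ := h
  rw [mul_smul]
  exact Submodule.smul_mem_pointwise_smul _ r ⊤ Submodule.mem_top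

theorem le_add_pow_sub {q : ℕ} (hq : 1 < q) (n s : ℕ) : s ≤ n + q ^ (s - n) :=
  Nat.sub_le_iff_le_add'.mp (Nat.lt_pow_self hq).le

theorem pow_dvd_pow_mul_pow_pow_sub {R : Type*} [CommMonoid R] {π y : R} {q : ℕ} (hq : 1 < q)
    (hy : π ∣ y) (n s : ℕ) : π ^ s ∣ π ^ n * y ^ q ^ (s - n) :=
  calc
    π ^ s ∣ π ^ (n + q ^ (s - n)) := pow_dvd_pow π (le_add_pow_sub hq n s)
    _ = π ^ n * π ^ q ^ (s - n) := pow_add ..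
    _ ∣ π ^ n * y ^ q ^ (s - n) := mul_dvd_mul_left _ (pow_dvd_pow_of_dvd hy _)

section

variable {R M I : Type*} [CommSemiring R] [AddCommGroup M] [Module R M] [Fintype I]
  {π : R} {q : ℕ}

open Pointwise in
theorem sum_pow_mul_pow_smul_sub_mem (hq : 1 < q) {y : ℕ → I → R} {j : I} (hy1 : y 0 j = 1)
    (hyπ : ∀ n i, ¬(n = 0 ∧ i = j) → π ∣ y n i) (b : I → ℕ → M) (s : ℕ) :
    (∑ n ∈ Finset.range (s + 1), ∑ i : I, (π ^ n * y n i ^ q ^ (s - n)) • b i (s - n)) - b j s ∈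
      π ^ s • (⊤ : Submodule R M) := by
  classical
  let summand (k : ℕ × I) : M := (π ^ k.1 * y k.1 k.2 ^ q ^ (s - k.1)) • b k.2 (s - k.1)
  have leading_term : summand (0, j) = b j s := by simp [summand, hy1]
  have leading_mem : (0, j) ∈ Finset.range (s + 1) ×ˢ Finset.univ := by simp
  rw [← Finset.sum_product' _ _ fun n i ↦ summand (n, i), ← leading_term,
    ← Finset.sum_erase_eq_sub leading_mem]
  refine Submodule.sum_mem _ fun ⟨n, i⟩ hk ↦ smul_mem_smul_top_of_dvd ?_ _
  have not_leading : ¬(n = 0 ∧ i = j) := by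
    simpa only [ne_eq, Prod.mk.injEq] using Finset.ne_of_mem_erase hk
  exact pow_dvd_pow_mul_pow_pow_sub hq (hyπ n i not_leading) n s

theorem curves_core_congruence_general (hq : 1 < q) {x : I → ℕ → I → R}
    (hx1 : ∀ i, x i 0 i = 1) (hxπ : ∀ j n i, ¬(n = 0 ∧ i = j) → π ∣ x j n i)
    {a astar : I → ℕ → M}
    (hrel : ∀ j s, a j s = ∑ n ∈ Finset.range (s + 1), ∑ i : I,
      (π ^ n * x j n i ^ q ^ (s - n)) • astar i (s - n)) (j : I) (s : ℕ) :
    ∃ m : M, a j s - astar j s = π ^ s • m := by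
  have h := sum_pow_mul_pow_smul_sub_mem hq (hx1 j) (hxπ j) astar s
  rw [← hrel, Submodule.mem_smul_pointwise_iff_exists] at h
  obtain ⟨m, -, hm⟩ := h
  exact ⟨m, hm.symm⟩

end

/-- **Core congruence of the two-basic-sets-of-curves lemma.**
Given `x(j,n,i) ∈ R` with `x(i,0,i) = 1` and `x(j,n,i) ∈ pR` unless `n = 0` and `i = j`,
and families `a, a* : I → ℕ → M` related by
`a(j,s) = Σ_{n=0}^{s} Σ_{i∈I} p^n · x(j,n,i)^{p^{s−n}} · a*(i, s−n)`,
we have `a(j,s) − a*(j,s) ∈ p^s M` for all `j` and `s`. -/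
theorem curves_core_congruence
    (p : ℕ) (hp : p.Prime)
    (R : Type) [CommRing R]
    (M : Type) [AddCommGroup M] [Module R M]
    (I : Type) [Fintype I]
    (x : I → ℕ → I → R)
    (hx1 : ∀ i : I, x i 0 i = 1)
    (hxp : ∀ (j : I) (n : ℕ) (i : I), ¬(n = 0 ∧ i = j) → x j n i ∈ Ideal.span {(p : R)})
    (a astar : I → ℕ → M)
    (hrel : ∀ (j : I) (s : ℕ),
      a j s = ∑ n ∈ Finset.range (s + 1), ∑ i : I,
        ((p : R) ^ n * (x j n i) ^ (p ^ (s - n))) • astar i (s - n)) :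
    ∀ (j : I) (s : ℕ), ∃ m : M, a j s - astar j s = ((p : R) ^ s) • m :=
  curves_core_congruence_general hp.one_lt hx1
    (fun j n i h ↦ Ideal.mem_span_singleton.mp (hxp j n i h)) hrel
end
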